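/- arXiv:2412.17233 — 3 statements merged into one kernel-verified Lean document; each statement's English description precedes it below -/
import Mathlib

section
/- Let S = {i_1 < i_2 < ⋯ < i_{2r}} ⊆ {1,…,n} be a nonempty subset of even size 2r. For 1 ≤ m ≤ r define w_m := s_n · (s_{n−2} s_{n−3} ⋯ s_{i_{2m−1}}) · (s_{n−1} s_{n−2} ⋯ s_{i_{2m}}), where the first decreasing run is empty if i_{2m−1} > n−2 and the second is empty if i_{2m} > n−1, and set u := w_1 w_2 ⋯ w_r ∈ W. Then: (a) I_u = S; (b) u sends the elements of {1,…,n}∖S, listed in increasing order, to 1, 2, …, n−2r respectively, and sends i_m to 2n−m+1 for each 1 ≤ m ≤ 2r; and (c) setting L := r + Σ_{m=1}^{r} ((n−1−i_{2m−1}) + (n−i_{2m})), the given word for u has exactly L letters, and every expression of any v ∈ W with I_v = S as a product of elements of {s_1,…,s_n} has at least L factors. In particular, the given word is a reduced expression for the minimal-length coset representative of W_{[n−1]}\W corresponding to S. -/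
noncomputable section

open Matrix

/-- `N = n(n-1)/2`, the number of parameters. -/
def Npar (n : ℕ) : ℕ := n * (n - 1) / 2

/-- The decreasing run `a, a-1, …, b` (empty if `b > a`). -/
def decRun (a b : ℕ) : List ℕ := (List.range' b (a + 1 - b)).reverse

/-- The index sequence `(i_1, …, i_N)`: for `m = 1, …, ⌊n/2⌋` (here `m` is 0-based, so
`m+1` is the 1-based block index), concatenate `n`, the run `n-2, …, 2(m+1)-1`, and the
run `n-1, …, 2(m+1)`. -/
def wordD (n : ℕ) : List ℕ :=
  ((List.range (n / 2)).map (fun m =>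
    n :: (decRun (n - 2) (2 * m + 1) ++ decRun (n - 1) (2 * m + 2)))).flatten

/-- The matrix `x_i(t)` (index `i` is 1-based, matrix positions are 1-based in the paper,
0-based here). -/
def xMat (n : ℕ) (i : ℕ) (t : ℝ) : Matrix (Fin (2 * n)) (Fin (2 * n)) ℝ :=
  Matrix.of fun p q =>
    (if (p : ℕ) = (q : ℕ) then 1 else 0) +
    (if i < n then
        (if (p : ℕ) + 1 = i ∧ (q : ℕ) + 1 = i + 1 then t else 0)
      + (if (p : ℕ) + 1 = n + i + 1 ∧ (q : ℕ) + 1 = n + i then -t else 0)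
     else
        (if (p : ℕ) + 1 = n - 1 ∧ (q : ℕ) + 1 = 2 * n then t else 0)
      + (if (p : ℕ) + 1 = n ∧ (q : ℕ) + 1 = 2 * n - 1 then -t else 0))

/-- The product `x_{i_1}(t_1) ⋯ x_{i_N}(t_N)`; the parameter `t l` plays the role of
`t_{l+1}`. -/
def prodX (n : ℕ) (t : ℕ → ℝ) : Matrix (Fin (2 * n)) (Fin (2 * n)) ℝ :=
  ((List.range (Npar n)).map (fun l => xMat n ((wordD n).getD l 0) (t l))).prod

/-- The first block `X₁(t)` of the first `n` rows of the product. -/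
def X1 (n : ℕ) (t : ℕ → ℝ) : Matrix (Fin n) (Fin n) ℝ :=
  Matrix.of fun p q =>
    prodX n t ⟨(p : ℕ), by have := p.isLt; omega⟩ ⟨(q : ℕ), by have := q.isLt; omega⟩

/-- The second block `X₂(t)` of the first `n` rows of the product. -/
def X2 (n : ℕ) (t : ℕ → ℝ) : Matrix (Fin n) (Fin n) ℝ :=
  Matrix.of fun p q =>
    prodX n t ⟨(p : ℕ), by have := p.isLt; omega⟩ ⟨n + (q : ℕ), by have := q.isLt; omega⟩

/-- The skew-symmetric matrix `A(t) = X₁(t)⁻¹ · X₂(t)`. -/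
def Amat (n : ℕ) (t : ℕ → ℝ) : Matrix (Fin n) (Fin n) ℝ := (X1 n t)⁻¹ * X2 n t

/-- The set `S_n^{>0}` of totally positive skew-symmetric matrices. -/
def Spos (n : ℕ) : Set (Matrix (Fin n) (Fin n) ℝ) :=
  { A | ∃ t : ℕ → ℝ, (∀ i < Npar n, 0 < t i) ∧ A = Amat n t }

/-- The signed minor `M_{j,k}(A)`: `(-1)^{jk}` times the determinant of the submatrix of `A`
with (1-based) rows `{1,…,n-k-1} ∪ {n-k+j,…,n}` and columns `{1,…,n-j}`. -/
def Mminor (n j k : ℕ) (A : Matrix (Fin n) (Fin n) ℝ) : ℝ :=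
  (-1 : ℝ) ^ (j * k) *
    Matrix.det (Matrix.of fun (p q : Fin (n - j)) =>
      A (if (p : ℕ) < n - k - 1
          then ⟨(p : ℕ), by have := p.isLt; omega⟩
          else ⟨(p : ℕ) + j, by have := p.isLt; omega⟩)
        ⟨(q : ℕ), by have := q.isLt; omega⟩)

/-- The Pfaffian of an `m × m` matrix (intended for `m` even):
`Pf(B) = (1/(2^{m/2} (m/2)!)) Σ_σ sgn(σ) Π_i B_{σ(2i-1), σ(2i)}`. -/
def Pfaff {m : ℕ} (B : Matrix (Fin m) (Fin m) ℝ) : ℝ :=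
  (1 / ((2 : ℝ) ^ (m / 2) * (Nat.factorial (m / 2) : ℝ))) *
    ∑ σ : Equiv.Perm (Fin m), ((Equiv.Perm.sign σ : ℤ) : ℝ) *
      ∏ i : Fin (m / 2),
        B (σ ⟨2 * (i : ℕ), by have := i.isLt; omega⟩)
          (σ ⟨2 * (i : ℕ) + 1, by have := i.isLt; omega⟩)

/-- `Pf_I(A)`: the Pfaffian of the submatrix of `A` with rows and columns indexed by `I`
in increasing order. -/
def PfI {n : ℕ} (A : Matrix (Fin n) (Fin n) ℝ) (I : Finset (Fin n)) : ℝ :=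
  Pfaff (Matrix.of fun (p q : Fin I.card) =>
    A ((I.orderIsoOfFin rfl p : Fin n)) ((I.orderIsoOfFin rfl q : Fin n)))

/-- `sgn(I,[n]) = (-1)^{(Σ_{i∈I} i) - |I|(|I|+1)/2}` (the elements of `I` are 1-based, so a
0-based element `i` contributes `i+1`; the natural subtraction agrees with the integer one
since the sum of `|I|` distinct positive integers is at least `|I|(|I|+1)/2`). -/
def sgnSet {n : ℕ} (I : Finset (Fin n)) : ℝ :=
  (-1 : ℝ) ^ ((∑ i ∈ I, ((i : ℕ) + 1)) - I.card * (I.card + 1) / 2)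

/-- The block matrix `[Id_n | A]`. -/
def IdA {n : ℕ} (A : Matrix (Fin n) (Fin n) ℝ) : Matrix (Fin n) (Fin (2 * n)) ℝ :=
  Matrix.of fun p q =>
    if h : (q : ℕ) < n then (if (p : ℕ) = (q : ℕ) then 1 else 0)
    else A p ⟨(q : ℕ) - n, by have := q.isLt; omega⟩

/-- The full word `(j_1, …, j_{2N})`: `1, 2,1, 3,2,1, …, n-1,…,1` followed by `(i_1,…,i_N)`. -/
def wordFull (n : ℕ) : List ℕ :=
  (((List.range n).map (fun r => decRun r 1)).flatten) ++ wordD n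

/-- `z(ε) = x_{j_1}(ε) ⋯ x_{j_{2N}}(ε)`. -/
def zeps (n : ℕ) (ε : ℝ) : Matrix (Fin (2 * n)) (Fin (2 * n)) ℝ :=
  ((wordFull n).map (fun i => xMat n i ε)).prod

/-- `Z(ε) = z(ε)ᵀ · z(ε)`. -/
def Zeps (n : ℕ) (ε : ℝ) : Matrix (Fin (2 * n)) (Fin (2 * n)) ℝ :=
  (zeps n ε)ᵀ * zeps n ε

/-- First block `Y₁(ε)` of `[Id_n | A] · Z(ε)`. -/
def Y1 {n : ℕ} (A : Matrix (Fin n) (Fin n) ℝ) (ε : ℝ) : Matrix (Fin n) (Fin n) ℝ :=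
  Matrix.of fun p q => (IdA A * Zeps n ε) p ⟨(q : ℕ), by have := q.isLt; omega⟩

/-- Second block `Y₂(ε)` of `[Id_n | A] · Z(ε)`. -/
def Y2 {n : ℕ} (A : Matrix (Fin n) (Fin n) ℝ) (ε : ℝ) : Matrix (Fin n) (Fin n) ℝ :=
  Matrix.of fun p q => (IdA A * Zeps n ε) p ⟨n + (q : ℕ), by have := q.isLt; omega⟩

/-- The simple generators `s_i` of the Weyl group `W` of `SO(2n)`, as permutations of
`{1,…,2n}` (0-based here): for `1 ≤ i ≤ n-1`, `s_i = (i,i+1)(n+i,n+i+1)`; for `i = n`,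
`s_n = (n,2n-1)(n-1,2n)`. -/
def sGen (n : ℕ) (i : ℕ) : Equiv.Perm (Fin (2 * n)) :=
  if h : 1 ≤ i ∧ i ≤ n - 1 ∧ 2 ≤ n then
    Equiv.swap ⟨i - 1, by omega⟩ ⟨i, by omega⟩ *
      Equiv.swap ⟨n + i - 1, by omega⟩ ⟨n + i, by omega⟩
  else if h2 : i = n ∧ 2 ≤ n then
    Equiv.swap ⟨n - 1, by omega⟩ ⟨2 * n - 2, by omega⟩ *
      Equiv.swap ⟨n - 2, by omega⟩ ⟨2 * n - 1, by omega⟩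
  else 1

/-- Membership in the Weyl group `W`: `σ(n+i) ≡ n + σ(i) (mod 2n)` for all `1 ≤ i ≤ n`,
and the number of `i ∈ {1,…,n}` with `σ(i) > n` is even. (All positions are 0-based; a
0-based value `v` corresponds to the 1-based value `v+1`.) -/
def inW (n : ℕ) (σ : Equiv.Perm (Fin (2 * n))) : Prop :=
  (∀ i : Fin n,
    ((σ ⟨n + (i : ℕ), by have := i.isLt; omega⟩ : Fin (2 * n)) : ℕ)
      ≡ n + ((σ ⟨(i : ℕ), by have := i.isLt; omega⟩ : Fin (2 * n)) : ℕ) [MOD 2 * n]) ∧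
  Even (Finset.univ.filter (fun i : Fin n =>
    n ≤ ((σ ⟨(i : ℕ), by have := i.isLt; omega⟩ : Fin (2 * n)) : ℕ))).card

/-- `I_w = {i ∈ {1,…,n} : w(i) > n}`, as a finset of `Fin n` (0-based). -/
def Iset (n : ℕ) (σ : Equiv.Perm (Fin (2 * n))) : Finset (Fin n) :=
  Finset.univ.filter (fun i : Fin n =>
    n ≤ ((σ ⟨(i : ℕ), by have := i.isLt; omega⟩ : Fin (2 * n)) : ℕ))

/-- The parabolic subgroup `W_{[n-1]}` generated by `s_1, …, s_{n-1}`. -/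
def Wpar (n : ℕ) : Subgroup (Equiv.Perm (Fin (2 * n))) :=
  Subgroup.closure { σ | ∃ i, 1 ≤ i ∧ i ≤ n - 1 ∧ σ = sGen n i }

/-- The standard basis vector `e_i` of `ℝ^{2n}` (with `i : Fin n` 0-based, sitting in
position `i` of the first block). -/
def evec (n : ℕ) (i : Fin n) : Fin (2 * n) → ℝ :=
  Pi.single ⟨(i : ℕ), by have := i.isLt; omega⟩ 1

/-- The standard basis vector `f_j` of `ℝ^{2n}` (position `n + j`). -/
def fvec (n : ℕ) (j : Fin n) : Fin (2 * n) → ℝ :=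
  Pi.single ⟨n + (j : ℕ), by have := j.isLt; omega⟩ 1

/-- `f = ι(f_1)⋯ι(f_n)` in the Clifford algebra. -/
def fElt {n : ℕ} (Q : QuadraticForm ℝ (Fin (2 * n) → ℝ)) : CliffordAlgebra Q :=
  (List.ofFn (fun j : Fin n => CliffordAlgebra.ι Q (fvec n j))).prod

/-- `e_S = ι(e_{l_1})⋯ι(e_{l_s})` where `l_1 < ⋯ < l_s` enumerates `S`. -/
def eProd {n : ℕ} (Q : QuadraticForm ℝ (Fin (2 * n) → ℝ)) (S : Finset (Fin n)) :
    CliffordAlgebra Q :=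
  ((S.sort (· ≤ ·)).map (fun l => CliffordAlgebra.ι Q (evec n l))).prod

/-- `h = Π_{i=1}^n ι(e_i + Σ_j A_{ij} f_j)` (product in increasing order of `i`). -/
def hElt {n : ℕ} (Q : QuadraticForm ℝ (Fin (2 * n) → ℝ)) (A : Matrix (Fin n) (Fin n) ℝ) :
    CliffordAlgebra Q :=
  (List.ofFn (fun i : Fin n =>
    CliffordAlgebra.ι Q (evec n i + ∑ j : Fin n, A i j • fvec n j))).prod

/-- The sorted list of the (1-based) elements of `S ⊆ {1,…,n}`. -/
def valsOf {n : ℕ} (S : Finset (Fin n)) : List ℕ :=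
  (S.sort (· ≤ ·)).map (fun i => (i : ℕ) + 1)

/-- The word `w_1 w_2 ⋯ w_r` where
`w_m = s_n (s_{n-2}⋯s_{i_{2m-1}}) (s_{n-1}⋯s_{i_{2m}})` and `vals` lists `i_1 < i_2 < ⋯`
(1-based); `m` is 0-based here. -/
def uWord (n r : ℕ) (vals : List ℕ) : List ℕ :=
  ((List.range r).map (fun m =>
    n :: (decRun (n - 2) (vals.getD (2 * m) 0) ++ decRun (n - 1) (vals.getD (2 * m + 1) 0)))).flatten

/-- The permutation `u = w_1 w_2 ⋯ w_r`. -/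
def uPerm (n r : ℕ) (vals : List ℕ) : Equiv.Perm (Fin (2 * n)) :=
  ((uWord n r vals).map (sGen n)).prod

/-- `L = r + Σ_{m=1}^{r} ((n-1-i_{2m-1}) + (n-i_{2m}))`. -/
def Lval (n r : ℕ) (vals : List ℕ) : ℕ :=
  r + ∑ m ∈ Finset.range r, ((n - 1 - vals.getD (2 * m) 0) + (n - vals.getD (2 * m + 1) 0))


lemma swap_val {N : ℕ} (a b x : Fin N) : (Equiv.swap a b x).val =
    if x.val = a.val then b.val else if x.val = b.val then a.val else x.val := by
  simp only [Equiv.swap_apply_def, Fin.ext_iff]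
  split_ifs <;> rfl

lemma sGen_lt_val (n i : ℕ) (h1 : 1 ≤ i) (h2 : i < n) (x : Fin (2 * n)) :
    (sGen n i x).val = if x.val + 1 = i then i else if x.val = i then i - 1
      else if x.val + 1 = n + i then n + i else if x.val = n + i then n + i - 1 else x.val := by
  rw [sGen, dif_pos ⟨h1, by omega, by omega⟩]
  obtain ⟨x, hx⟩ := x
  simp only [Equiv.Perm.mul_apply, swap_val]
  split_ifs <;> omega

lemma sGen_n_val (n : ℕ) (h2 : 2 ≤ n) (x : Fin (2 * n)) :
    (sGen n n x).val = if x.val + 1 = n then 2 * n - 2 else if x.val = 2 * n - 2 then n - 1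
      else if x.val + 2 = n then 2 * n - 1 else if x.val = 2 * n - 1 then n - 2 else x.val := by
  rw [sGen, dif_neg (by omega), dif_pos ⟨rfl, h2⟩]
  obtain ⟨x, hx⟩ := x
  simp only [Equiv.Perm.mul_apply, swap_val]
  split_ifs <;> omega

lemma decRun_length (a b : ℕ) : (decRun a b).length = a + 1 - b := by
  simp [decRun]

lemma decRun_cons (a b : ℕ) (h : b ≤ a) : decRun a b = decRun a (b + 1) ++ [b] := by
  have : a + 1 - b = (a + 1 - (b + 1)) + 1 := by omega
  rw [decRun, this, List.range'_succ, List.reverse_cons, decRun]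

lemma decRun_val (n a : ℕ) (h2 : a < n) (k : ℕ) : ∀ b, 1 ≤ b → b + k = a + 1 →
    ∀ x : Fin (2 * n),
    (((decRun a b).map (sGen n)).prod x).val =
      if x.val + 1 = b then a else if b ≤ x.val ∧ x.val ≤ a then x.val - 1
      else if x.val + 1 = n + b then n + a
      else if n + b ≤ x.val ∧ x.val ≤ n + a then x.val - 1 else x.val := by
  induction k with
  | zero =>
    intro b hb hk x
    have : decRun a b = [] := by
      apply List.eq_nil_of_length_eq_zero; rw [decRun_length]; omega
    rw [this]
    simp only [List.map_nil, List.prod_nil, Equiv.Perm.one_apply]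
    split_ifs <;> omega
  | succ k ih =>
    intro b hb hk x
    rw [decRun_cons a b (by omega), List.map_append, List.prod_append, Equiv.Perm.mul_apply]
    simp only [List.map_cons, List.map_nil, List.prod_cons, List.prod_nil, mul_one]
    rw [ih (b + 1) (by omega) (by omega), sGen_lt_val n b hb (by omega)]
    have := x.isLt
    split_ifs <;> omega

def blk (n a b : ℕ) : List ℕ := n :: (decRun (n - 2) a ++ decRun (n - 1) b)

set_option maxHeartbeats 4000000 in
lemma blk_val (n a b : ℕ) (hn : 2 ≤ n) (ha : 1 ≤ a) (hab : a < b) (hb : b ≤ n)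
    (x : Fin (2 * n)) :
    (((blk n a b).map (sGen n)).prod x).val =
      if x.val + 1 = a then 2 * n - 1 else if x.val + 1 = b then 2 * n - 2
      else if x.val < a then x.val else if x.val < b then x.val - 1
      else if x.val < n then x.val - 2
      else if x.val + 1 = n + a then n - 1 else if x.val + 1 = n + b then n - 2
      else if x.val < n + a then x.val else if x.val < n + b then x.val - 1
      else x.val - 2 := by
  rw [blk, List.map_cons, List.prod_cons, List.map_append, List.prod_append,
    Equiv.Perm.mul_apply, Equiv.Perm.mul_apply]
  have e1 := decRun_val n (n - 1) (by omega) (n - b) b (by omega) (by omega) x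
  generalize ((decRun (n - 1) b).map (sGen n)).prod x = y at *
  have e2 := decRun_val n (n - 2) (by omega) (n - 1 - a) a ha (by omega) y
  generalize ((decRun (n - 2) a).map (sGen n)).prod y = z at *
  have e3 := sGen_n_val n hn z
  generalize sGen n n z = w at *
  have hx := x.isLt
  have hy := y.isLt
  have hz := z.isLt
  generalize x.val = x at *
  generalize y.val = y at *
  generalize z.val = z at *
  generalize w.val = w at *
  split_ifs <;> split_ifs at e1 <;> (try omega) <;> split_ifs at e2 <;> (try omega) <;>
    split_ifs at e3 <;> omega

lemma uWord_succ (n k : ℕ) (vals : List ℕ) :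
    uWord n (k + 1) vals = uWord n k vals ++
      blk n (vals.getD (2 * k) 0) (vals.getD (2 * k + 1) 0) := by
  simp [uWord, List.range_succ, blk]

lemma uPerm_succ (n k : ℕ) (vals : List ℕ) (x : Fin (2 * n)) :
    uPerm n (k + 1) vals x = uPerm n k vals
      (((blk n (vals.getD (2 * k) 0) (vals.getD (2 * k + 1) 0)).map (sGen n)).prod x) := by
  simp only [uPerm, uWord_succ, List.map_append, List.prod_append, Equiv.Perm.mul_apply]

set_option maxHeartbeats 4000000 in
lemma uPerm_main (n r : ℕ) (hn : 2 ≤ n) (vals : List ℕ)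
    (hmono : ∀ i j, i < j → j < 2 * r → vals.getD i 0 < vals.getD j 0)
    (hpos : ∀ i, i < 2 * r → 1 ≤ vals.getD i 0 ∧ vals.getD i 0 ≤ n) :
    ∀ k, k ≤ r →
      (∀ m, m < 2 * k → ∀ x : Fin (2 * n), x.val + 1 = vals.getD m 0 →
        (uPerm n k vals x).val = 2 * n - (m + 1)) ∧
      (∀ c, c ≤ 2 * k → ∀ y, y < n → (∀ m, m < c → vals.getD m 0 ≤ y) →
        (∀ m, c ≤ m → m < 2 * k → y + 1 < vals.getD m 0) →
        (∀ x : Fin (2 * n), x.val = y → (uPerm n k vals x).val + c = y) ∧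
        (∀ x : Fin (2 * n), x.val = y + n → (uPerm n k vals x).val + c = y + n)) := by
  intro k
  induction k with
  | zero =>
    intro _
    refine ⟨fun m hm => by omega, fun c hc y hy _ _ => ?_⟩
    obtain rfl : c = 0 := by omega
    simp [uPerm, uWord]
  | succ k ih =>
    intro hk
    obtain ⟨ihA, ihB⟩ := ih (by omega)
    have hab := hmono (2 * k) (2 * k + 1) (by omega) (by omega)
    have ha := hpos (2 * k) (by omega)
    have hb := hpos (2 * k + 1) (by omega)
    have hlt : ∀ m, m < 2 * k → vals.getD m 0 < vals.getD (2 * k) 0 :=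
      fun m hm => hmono m (2 * k) hm (by omega)
    have hw := blk_val n _ _ hn ha.1 hab hb.2
    have hB := ihB (2 * k) (by omega)
    constructor
    · intro m hm x hx
      rw [uPerm_succ]
      have hwx := hw x
      generalize ((blk n (vals.getD (2 * k) 0) (vals.getD (2 * k + 1) 0)).map (sGen n)).prod x = z at *
      rcases Nat.lt_or_ge m (2 * k) with h | h
      · have := hlt m h
        refine ihA m h z ?_
        split_ifs at hwx <;> omega
      · rcases (show m = 2 * k ∨ m = 2 * k + 1 by omega) with rfl | rfl
        · have := (hB (n - 1) (by omega) (fun m hm => by have := hlt m hm; omega)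
            (fun m _ _ => by omega)).2 z (by split_ifs at hwx <;> omega)
          omega
        · have := (hB (n - 2) (by omega) (fun m hm => by have := hlt m hm; omega)
            (fun m _ _ => by omega)).2 z (by split_ifs at hwx <;> omega)
          omega
    · intro c hc y hy h1 h2
      have key : ∃ c' y', c' ≤ 2 * k ∧ y' < n ∧ y = y' + (c - c') ∧ c' ≤ c ∧
          (∀ m, m < c' → vals.getD m 0 ≤ y') ∧
          (∀ m, c' ≤ m → m < 2 * k → y' + 1 < vals.getD m 0) ∧
          (∀ x : Fin (2 * n), x.val = y →
            (((blk n (vals.getD (2 * k) 0) (vals.getD (2 * k + 1) 0)).map (sGen n)).prod x).val = y') ∧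
          (∀ x : Fin (2 * n), x.val = y + n →
            (((blk n (vals.getD (2 * k) 0) (vals.getD (2 * k + 1) 0)).map (sGen n)).prod x).val = y' + n) := by
        rcases Nat.lt_or_ge (2 * k) c with h | h
        · have h3 := h1 (2 * k) h
          rcases (show c = 2 * k + 1 ∨ c = 2 * k + 2 by omega) with rfl | rfl
          · have h4 := h2 (2 * k + 1) (by omega) (by omega)
            refine ⟨2 * k, y - 1, le_rfl, by omega, by omega, by omega,
              fun m hm => by have := hlt m hm; omega, fun m _ _ => by omega,
              fun x hx => ?_, fun x hx => ?_⟩ <;> rw [hw x] <;> split_ifs <;> omega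
          · have h4 := h1 (2 * k + 1) (by omega)
            refine ⟨2 * k, y - 2, le_rfl, by omega, by omega, by omega,
              fun m hm => by have := hlt m hm; omega, fun m _ _ => by omega,
              fun x hx => ?_, fun x hx => ?_⟩ <;> rw [hw x] <;> split_ifs <;> omega
        · have h3 := h2 (2 * k) h (by omega)
          refine ⟨c, y, h, hy, by omega, le_rfl, h1, fun m hm hm' => h2 m hm (by omega),
            fun x hx => ?_, fun x hx => ?_⟩ <;> rw [hw x] <;> split_ifs <;> omega
      obtain ⟨c', y', e1, e2, e3, e4, e5, e6, e7, e8⟩ := key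
      obtain ⟨f1, f2⟩ := ihB c' e1 y' e2 e5 e6
      refine ⟨fun x hx => ?_, fun x hx => ?_⟩
      · have := f1 _ (e7 x hx)
        rw [uPerm_succ]; omega
      · have := f2 _ (e8 x hx)
        rw [uPerm_succ]; omega

lemma exists_cut (e : ℕ → ℕ) (N y : ℕ) (hmono : ∀ i j, i < j → j < N → e i < e j)
    (hne : ∀ i, i < N → e i ≠ y + 1) :
    ∃ c, c ≤ N ∧ (∀ m, m < c → e m ≤ y) ∧ (∀ m, c ≤ m → m < N → y + 1 < e m) := by
  induction N with
  | zero => exact ⟨0, le_rfl, fun m hm => by omega, fun m _ hm => by omega⟩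
  | succ N ih =>
    obtain ⟨c, hc, h1, h2⟩ := ih (fun i j hij hj => hmono i j hij (by omega))
      (fun i hi => hne i (by omega))
    have hN := hne N (by omega)
    by_cases h : e N ≤ y
    · refine ⟨N + 1, le_rfl, fun m hm => ?_, fun m hm hm' => by omega⟩
      rcases Nat.lt_or_ge m N with h' | h'
      · have := hmono m N h' (by omega); omega
      · obtain rfl : m = N := by omega
        exact h
    · refine ⟨c, by omega, h1, fun m hm hm' => ?_⟩
      rcases Nat.lt_or_ge m N with h' | h'
      · exact h2 m hm h'
      · obtain rfl : m = N := by omega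
        omega

lemma valsOf_getD {n : ℕ} (S : Finset (Fin n)) (l : Fin S.card) :
    (valsOf S).getD l 0 = ((S.orderIsoOfFin rfl l : Fin n) : ℕ) + 1 := by
  rw [Finset.coe_orderIsoOfFin_apply, Finset.orderEmbOfFin_apply, valsOf]
  have h : ∀ L : List (Fin n), List.flatMap (fun a : Fin n => [Fin.val a]) L = List.map (fun a : Fin n => Fin.val a) L := by
    intro L
    induction L with
    | nil => rfl
    | cons a L ih => simp [ih]
  simp [List.getD_eq_getElem?_getD, h]

lemma uWord_length (n k : ℕ) (vals : List ℕ) (h : 2 ≤ n) :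
    (uWord n k vals).length = Lval n k vals := by
  induction k with
  | zero => simp [uWord, Lval]
  | succ k ih =>
    rw [uWord_succ, List.length_append, ih, blk, Lval, Lval, Finset.sum_range_succ]
    simp only [List.length_cons, List.length_append, decRun_length]
    omega

/-- weight -/
def wt (n : ℕ) (σ : Equiv.Perm (Fin (2 * n))) : ℕ :=
  ∑ j : Fin n, if n ≤ (σ ⟨j.val, by have := j.isLt; omega⟩).val then n - 1 - j.val else 0

lemma wt_mul (n i : ℕ) (hn : 2 ≤ n) (h1 : 1 ≤ i) (h2 : i ≤ n) (σ : Equiv.Perm (Fin (2 * n))) :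
    wt n (σ * sGen n i) ≤ wt n σ + 1 := by
  rcases Nat.lt_or_ge i n with h | h
  · let τ : Equiv.Perm (Fin n) := Equiv.swap ⟨i - 1, by omega⟩ ⟨i, by omega⟩
    have hτ : ∀ j : Fin n, (τ j).val = if j.val + 1 = i then i else if j.val = i then i - 1 else j.val := by
      rintro ⟨j, hj⟩
      simp only [τ, swap_val]
      split_ifs <;> omega
    have e1 : wt n (σ * sGen n i) = ∑ j : Fin n,
        if n ≤ (σ ⟨j.val, by have := j.isLt; omega⟩).val then n - 1 - (τ j).val else 0 := by
      rw [wt, ← Equiv.sum_comp τ]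
      refine Finset.sum_congr rfl fun j _ => ?_
      have : sGen n i ⟨(τ j).val, by have := (τ j).isLt; omega⟩ =
          ⟨j.val, by have := j.isLt; omega⟩ := by
        apply Fin.ext
        rw [sGen_lt_val n i h1 h]
        have := hτ j
        have := j.isLt
        simp only
        split_ifs at * <;> omega
      rw [Equiv.Perm.mul_apply, this]
    have e2 : ∑ j : Fin n, (if j = ⟨i, h⟩ then 1 else 0) = 1 := by simp
    rw [← e2, e1, wt, ← Finset.sum_add_distrib]
    refine Finset.sum_le_sum fun j _ => ?_
    have := hτ j
    have := j.isLt
    simp only [Fin.ext_iff]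
    split_ifs at * <;> omega
  · obtain rfl : i = n := by omega
    have e2 : ∑ j : Fin i, (if j = ⟨i - 2, by omega⟩ then 1 else 0) = 1 := by simp
    rw [← e2, wt, wt, ← Finset.sum_add_distrib]
    refine Finset.sum_le_sum fun j _ => ?_
    have hj := j.isLt
    by_cases hj2 : j.val + 2 < i + 1
    · by_cases hj3 : j.val + 2 = i
      · simp only [Fin.ext_iff]
        split_ifs <;> omega
      · have : sGen i i ⟨j.val, by omega⟩ = ⟨j.val, by omega⟩ := by
          apply Fin.ext
          rw [sGen_n_val i hn]
          simp only
          split_ifs <;> omega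
        rw [Equiv.Perm.mul_apply, this]
        exact Nat.le_add_right _ _
    · split_ifs <;> omega

lemma wt_le (n : ℕ) (hn : 2 ≤ n) (ls : List ℕ) : (∀ i ∈ ls, 1 ≤ i ∧ i ≤ n) →
    wt n (ls.map (sGen n)).prod ≤ ls.length := by
  induction ls using List.reverseRecOn with
  | nil =>
    intro _
    simp only [wt, List.map_nil, List.prod_nil, Equiv.Perm.one_apply, List.length_nil]
    rw [Finset.sum_eq_zero]
    intro j _
    have := j.isLt
    rw [if_neg (by omega)]
  | append_singleton l a ih =>
    intro h
    have h1 := ih (fun i hi => h i (by simp [hi]))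
    have h2 := h a (by simp)
    have := wt_mul n a hn h2.1 h2.2 (l.map (sGen n)).prod
    simp only [List.map_append, List.prod_append, List.map_cons, List.map_nil, List.prod_cons,
      List.prod_nil, mul_one, List.length_append, List.length_cons, List.length_nil]
    omega

lemma Lval_eq (n r : ℕ) (vals : List ℕ)
    (hmono : ∀ i j, i < j → j < 2 * r → vals.getD i 0 < vals.getD j 0)
    (hpos : ∀ i, i < 2 * r → 1 ≤ vals.getD i 0 ∧ vals.getD i 0 ≤ n) :
    Lval n r vals = ∑ m ∈ Finset.range (2 * r), (n - vals.getD m 0) := by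
  have : ∀ k, k ≤ r → Lval n k vals = ∑ m ∈ Finset.range (2 * k), (n - vals.getD m 0) := by
    intro k
    induction k with
    | zero => simp [Lval]
    | succ k ih =>
      intro hk
      have ih := ih (by omega)
      rw [show 2 * (k + 1) = 2 * k + 1 + 1 by ring, Finset.sum_range_succ, Finset.sum_range_succ,
        ← ih, Lval, Lval, Finset.sum_range_succ]
      have := hmono (2 * k) (2 * k + 1) (by omega) (by omega)
      have := hpos (2 * k + 1) (by omega)
      omega
  exact this r le_rfl

lemma card_cut {n : ℕ} (T : Finset (Fin n)) (c : ℕ) (hc : c ≤ T.card) (y : ℕ)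
    (h : ∀ l : Fin T.card, ((T.orderIsoOfFin rfl l : Fin n) : ℕ) < y ↔ l.val < c) :
    (T.filter (fun j => j.val < y)).card = c := by
  have : T.filter (fun j => j.val < y) =
      (Finset.univ.filter (fun l : Fin T.card => l.val < c)).map
        (T.orderEmbOfFin rfl).toEmbedding := by
    ext j
    simp only [Finset.mem_filter, Finset.mem_map, Finset.mem_univ, true_and,
      RelEmbedding.coe_toEmbedding]
    constructor
    · rintro ⟨hj, hjy⟩
      refine ⟨(T.orderIsoOfFin rfl).symm ⟨j, hj⟩, ?_, ?_⟩
      · rw [← h]; simpa using hjy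
      · rw [← Finset.coe_orderIsoOfFin_apply]; simp
    · rintro ⟨l, hl, rfl⟩
      refine ⟨Finset.orderEmbOfFin_mem _ _ _, ?_⟩
      rw [← Finset.coe_orderIsoOfFin_apply]
      exact (h l).2 hl
  rw [this, Finset.card_map, Fin.card_filter_val_lt]
  omega

theorem minimal_coset_representative_word (n r : ℕ) (hn : 2 ≤ n) (hr : 1 ≤ r)
    (S : Finset (Fin n)) (hS : S.card = 2 * r) :
    Iset n (uPerm n r (valsOf S)) = S ∧
    (∀ l : Fin (Sᶜ.card),
      ((uPerm n r (valsOf S))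
        ⟨((Sᶜ.orderIsoOfFin rfl l : Fin n) : ℕ),
          by have := (Sᶜ.orderIsoOfFin rfl l : Fin n).isLt; omega⟩ : Fin (2 * n)).val
        = (l : ℕ)) ∧
    (∀ l : Fin S.card,
      ((uPerm n r (valsOf S))
        ⟨((S.orderIsoOfFin rfl l : Fin n) : ℕ),
          by have := (S.orderIsoOfFin rfl l : Fin n).isLt; omega⟩ : Fin (2 * n)).val
        = 2 * n - ((l : ℕ) + 1)) ∧
    (uWord n r (valsOf S)).length = Lval n r (valsOf S) ∧
    (∀ v : Equiv.Perm (Fin (2 * n)), inW n v → Iset n v = S →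
      ∀ ls : List ℕ, (∀ i ∈ ls, 1 ≤ i ∧ i ≤ n) → (ls.map (sGen n)).prod = v →
        Lval n r (valsOf S) ≤ ls.length) := by
  have hcS : ∀ m, m < 2 * r → m < S.card := fun m hm => by omega
  have hmono : ∀ i j, i < j → j < 2 * r → (valsOf S).getD i 0 < (valsOf S).getD j 0 := by
    intro i j hij hj
    have hi : i < 2 * r := by omega
    have h1 := valsOf_getD S ⟨i, hcS i hi⟩
    have h2 := valsOf_getD S ⟨j, hcS j hj⟩
    have h3 : S.orderIsoOfFin rfl ⟨i, hcS i hi⟩ < S.orderIsoOfFin rfl ⟨j, hcS j hj⟩ :=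
      (OrderIso.lt_iff_lt _).2 hij
    have h4 : ((S.orderIsoOfFin rfl ⟨i, hcS i hi⟩ : Fin n) : ℕ) <
      ((S.orderIsoOfFin rfl ⟨j, hcS j hj⟩ : Fin n) : ℕ) := h3
    simp only at h1 h2
    omega
  have hpos : ∀ i, i < 2 * r → 1 ≤ (valsOf S).getD i 0 ∧ (valsOf S).getD i 0 ≤ n := by
    intro i hi
    have h1 := valsOf_getD S ⟨i, hcS i hi⟩
    have := (S.orderIsoOfFin rfl ⟨i, hcS i hi⟩ : Fin n).isLt
    simp only at h1
    omega
  have h2rn : 2 * r ≤ n := by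
    have := Finset.card_le_univ S
    simp at this; omega
  obtain ⟨hA, hB⟩ := uPerm_main n r hn (valsOf S) hmono hpos r le_rfl
  have hSv : ∀ l : Fin S.card,
      ((uPerm n r (valsOf S))
        ⟨((S.orderIsoOfFin rfl l : Fin n) : ℕ),
          by have := (S.orderIsoOfFin rfl l : Fin n).isLt; omega⟩ : Fin (2 * n)).val
        = 2 * n - ((l : ℕ) + 1) := by
    intro l
    exact hA l (by have := l.isLt; omega) _ (valsOf_getD S l).symm
  have hSc : ∀ x : Fin n, x ∉ S → ((uPerm n r (valsOf S)) ⟨x.val, by omega⟩).val +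
      (S.filter (fun j => j.val < x.val)).card = x.val := by
    intro x hx
    obtain ⟨c, hc, h1, h2⟩ := exists_cut (fun m => (valsOf S).getD m 0) (2 * r) x.val hmono (by
      intro i hi he
      have h1 := valsOf_getD S ⟨i, hcS i hi⟩
      simp only at h1 he
      apply hx
      have : x = (S.orderIsoOfFin rfl ⟨i, hcS i hi⟩ : Fin n) := by
        apply Fin.ext; omega
      rw [this]
      exact (S.orderIsoOfFin rfl ⟨i, hcS i hi⟩).2)
    rw [card_cut S c (by omega) x.val]
    · exact (hB c hc x.val x.isLt h1 h2).1 _ rfl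
    · intro l
      have h3 := valsOf_getD S l
      have h4 := l.isLt
      constructor
      · intro h
        by_contra h5
        have := h2 l (by omega) (by omega)
        omega
      · intro h
        have := h1 l h
        omega
  refine ⟨?_, ?_, hSv, uWord_length n r _ hn, ?_⟩
  · ext x
    simp only [Iset, Finset.mem_filter, Finset.mem_univ, true_and]
    constructor
    · intro h
      by_contra hx
      have := hSc x hx
      have := x.isLt
      omega
    · intro hx
      have h1 := hSv ((S.orderIsoOfFin rfl).symm ⟨x, hx⟩)
      simp only [OrderIso.apply_symm_apply] at h1
      have := ((S.orderIsoOfFin rfl).symm ⟨x, hx⟩).isLt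
      omega
  · intro l
    have h1 := hSc (Sᶜ.orderIsoOfFin rfl l : Fin n)
      (Finset.mem_compl.1 (Sᶜ.orderIsoOfFin rfl l).2)
    have h2 := card_cut Sᶜ l l.isLt.le ((Sᶜ.orderIsoOfFin rfl l : Fin n) : ℕ) (by
      intro l'
      have : Sᶜ.orderIsoOfFin rfl l' < Sᶜ.orderIsoOfFin rfl l ↔ l' < l := OrderIso.lt_iff_lt _
      exact this)
    have h3 : ∀ x : Fin n, (S.filter (fun j => j.val < x.val)).card +
        (Sᶜ.filter (fun j => j.val < x.val)).card = x.val := by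
      intro x
      rw [← Finset.card_union_of_disjoint, ← Finset.filter_union, Finset.union_compl,
        Fin.card_filter_val_lt]
      · have := x.isLt; omega
      · exact Finset.disjoint_filter_filter disjoint_compl_right
    have h4 := h3 (Sᶜ.orderIsoOfFin rfl l : Fin n)
    omega
  · intro v _ hv ls hls hprod
    have h1 := wt_le n hn ls hls
    rw [hprod] at h1
    refine le_trans (le_of_eq ?_) h1
    rw [Lval_eq n r _ hmono hpos, wt, ← Finset.sum_filter]
    have h2 : (Finset.univ.filter (fun i : Fin n =>
      n ≤ ((v ⟨(i : ℕ), by have := i.isLt; omega⟩ : Fin (2 * n)) : ℕ))) = S := hv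
    rw [h2, ← hS, Finset.sum_range, ← Finset.sum_coe_sort S,
      ← Equiv.sum_comp (S.orderIsoOfFin rfl).toEquiv]
    refine Finset.sum_congr rfl fun l _ => ?_
    rw [valsOf_getD]
    simp only [RelIso.coe_fn_toEquiv]
    omega
end
end

section
/- Let (e_1,…,e_n,f_1,…,f_n) denote the standard basis of ℝ^{2n} and let Q be the quadratic form on ℝ^{2n} given by Q(x) = 2·Σ_{i=1}^{n} x_i x_{n+i} (so that in the Clifford algebra Cl(Q), with canonical embedding ι, one has ι(u)ι(v) + ι(v)ι(u) = 2q(u,v) where q(x,y) = Σ x_i y_{n+i} + Σ y_i x_{n+i}). In Cl(Q), set f := ι(f_1)·ι(f_2)⋯ι(f_n), and for S ⊆ {1,…,n} let e_S := ι(e_{l_1})⋯ι(e_{l_s}) where l_1 < ⋯ < l_s enumerate S. Let A be an n×n real skew-symmetric matrix and set h := ∏_{i=1}^{n} ι(e_i + Σ_{j=1}^{n} A_{ij} f_j), the product taken in increasing order of i. Then h·f = Σ_{I ⊆ {1,…,n}, |I| even} sgn(I,[n]) · 2^{|I|/2} · Pf_I(A) · e_{{1,…,n}∖I} · f. -/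
noncomputable section

open Matrix

section PureSpinorAux

open Equiv Finset

/-- aux permutation -/
def mkP {N : ℕ} (p : Fin (N+1)) (ρ : Perm (Fin N)) : Perm (Fin (N+1)) :=
  p.cycleRange.symm * Equiv.Perm.decomposeFin.symm (0, ρ)

lemma mkP_zero {N : ℕ} (p : Fin (N+1)) (ρ : Perm (Fin N)) : mkP p ρ 0 = p := by
  simp [mkP]

lemma mkP_succ {N : ℕ} (p : Fin (N+1)) (ρ : Perm (Fin N)) (x : Fin N) :
    mkP p ρ x.succ = p.succAbove (ρ x) := by
  simp [mkP]

lemma sign_mkP {N : ℕ} (p : Fin (N+1)) (ρ : Perm (Fin N)) :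
    Perm.sign (mkP p ρ) = (-1)^(p:ℕ) * Perm.sign ρ := by
  simp [mkP, Equiv.Perm.decomposeFin.symm_sign]

lemma mkP_bij {N : ℕ} :
    Function.Bijective (fun x : Fin (N+1) × Perm (Fin N) => mkP x.1 x.2) := by
  rw [Fintype.bijective_iff_injective_and_card]
  constructor
  · rintro ⟨p, ρ⟩ ⟨q, τ⟩ h
    simp only at h
    have h0 : p = q := by rw [← mkP_zero p ρ, h, mkP_zero]
    subst h0
    congr 1
    ext x
    have := mkP_succ p ρ x
    rw [h, mkP_succ] at this
    rw [Fin.succAbove_right_injective this]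
  · simp [Fintype.card_perm, Nat.factorial_succ]

lemma sum_perm_mkP {N : ℕ} (F : Perm (Fin (N+1)) → ℝ) :
    ∑ σ, F σ = ∑ p, ∑ ρ, F (mkP p ρ) := by
  rw [← Fintype.sum_prod_type']
  exact (Fintype.sum_bijective _ mkP_bij _ _ (fun _ => rfl)).symm

/-- even index -/
def i0 {M : ℕ} (i : Fin M) : Fin (2*M) := ⟨2 * (i:ℕ), by have := i.isLt; omega⟩
/-- odd index -/
def i1 {M : ℕ} (i : Fin M) : Fin (2*M) := ⟨2 * (i:ℕ) + 1, by have := i.isLt; omega⟩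

/-- Pfaffian term -/
def pterm {M : ℕ} (B : Fin (2*M) → Fin (2*M) → ℝ) (σ : Perm (Fin (2*M))) : ℝ :=
  ((Perm.sign σ : ℤ) : ℝ) * ∏ i : Fin M, B (σ (i0 i)) (σ (i1 i))

/-- pairs -/
def pairE (M : ℕ) : Fin M × Fin 2 ≃ Fin (2*M) := finProdFinEquiv.trans (finCongr (mul_comm M 2))

lemma pairE_0 {M : ℕ} (i : Fin M) : pairE M (i, 0) = i0 i := by
  ext; simp [pairE, i0]
lemma pairE_1 {M : ℕ} (i : Fin M) : pairE M (i, 1) = i1 i := by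
  ext; simp [pairE, i1, add_comm]

lemma pterm_block {M : ℕ} (B : Fin (2*M) → Fin (2*M) → ℝ) (σ : Perm (Fin (2*M)))
    (π : Perm (Fin M)) :
    pterm B (σ * (pairE M).permCongr (prodCongrLeft (fun _ : Fin 2 => π))) = pterm B σ := by
  unfold pterm
  congr 1
  · rw [map_mul, Perm.sign_permCongr, Perm.sign_prodCongrLeft]
    simp
  · refine Fintype.prod_equiv π _ _ (fun i => ?_)
    simp only [← pairE_0, ← pairE_1]
    simp

lemma pterm_flip {M : ℕ} (B : Fin (2*M) → Fin (2*M) → ℝ) (hB : ∀ p q, B p q = - B q p)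
    (σ : Perm (Fin (2*M))) :
    pterm B (σ * (pairE M).permCongr (prodCongrRight (fun _ : Fin M => swap (0 : Fin 2) 1)))
      = pterm B σ := by
  unfold pterm
  rw [map_mul, Perm.sign_permCongr, Perm.sign_prodCongrRight]
  have : ∀ i : Fin M, B ((σ * (pairE M).permCongr
      (prodCongrRight (fun _ : Fin M => swap (0 : Fin 2) 1))) (i0 i))
      ((σ * (pairE M).permCongr (prodCongrRight (fun _ : Fin M => swap (0 : Fin 2) 1))) (i1 i))
      = (-1) * B (σ (i0 i)) (σ (i1 i)) := by
    intro i
    rw [hB]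
    simp only [← pairE_0, ← pairE_1]
    simp
  rw [Finset.prod_congr rfl (fun i _ => this i), Finset.prod_mul_distrib]
  have hs : Perm.sign (swap (0 : Fin 2) 1) = -1 := Perm.sign_swap (by decide)
  simp only [hs]
  have h1 : ((-1:ℝ)^M) * (-1)^M = 1 := by rw [← mul_pow]; simp
  simp
  linear_combination ((Perm.sign σ : ℤ) : ℝ) * (∏ i : Fin M, B (σ (i0 i)) (σ (i1 i))) * h1

lemma exists_tau {M : ℕ} (B : Fin (2*(M+1)) → Fin (2*(M+1)) → ℝ) (hB : ∀ p q, B p q = - B q p)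
    (p : Fin (2*(M+1))) : ∃ τ : Perm (Fin (2*(M+1))), τ (i0 0) = p ∧
      ∀ σ, pterm B (σ * τ) = pterm B σ := by
  obtain ⟨⟨i, b⟩, rfl⟩ := (pairE (M+1)).surjective p
  fin_cases b
  · refine ⟨_, ?_, fun σ => pterm_block B σ (swap 0 i)⟩
    simp only [← pairE_0]
    simp
  · refine ⟨(pairE (M+1)).permCongr (prodCongrLeft (fun _ : Fin 2 => swap 0 i)) *
      (pairE (M+1)).permCongr (prodCongrRight (fun _ : Fin (M+1) => swap (0 : Fin 2) 1)),
      ?_, fun σ => ?_⟩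
    · simp only [← pairE_0]
      simp
    · rw [← mul_assoc, pterm_flip B hB, pterm_block]

lemma sum_pterm {M : ℕ} (B : Fin (2*(M+1)) → Fin (2*(M+1)) → ℝ) (hB : ∀ p q, B p q = - B q p) :
    ∑ σ, pterm B σ = (2*(M+1) : ℝ) * ∑ σ with σ (i0 0) = i0 0, pterm B σ := by
  rw [← Finset.sum_fiberwise (s := Finset.univ) (g := fun σ : Perm (Fin (2*(M+1))) => σ.symm (i0 0))]
  have : ∀ p : Fin (2*(M+1)), ∑ σ : Perm (Fin (2*(M+1))) with σ.symm (i0 0) = p, pterm B σ =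
      ∑ σ with σ (i0 0) = i0 0, pterm B σ := by
    intro p
    obtain ⟨τ, h0, h⟩ := exists_tau B hB p
    refine Finset.sum_bij' (fun σ _ => σ * τ) (fun σ _ => σ * τ⁻¹) ?_ ?_ ?_ ?_ ?_
    · intro σ hσ
      simp only [Finset.mem_filter, Finset.mem_univ, true_and] at hσ ⊢
      rw [Perm.mul_apply, h0, ← hσ]; simp
    · intro σ hσ
      simp only [Finset.mem_filter, Finset.mem_univ, true_and] at hσ ⊢
      rw [Equiv.symm_apply_eq, ← h0]; simp [hσ]
    · intro σ _; simp
    · intro σ _; simp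
    · intro σ _; exact (h σ).symm
  rw [Finset.sum_congr rfl (fun p _ => this p)]
  simp

lemma pterm_mk {M : ℕ} (B : Fin (2*(M+1)) → Fin (2*(M+1)) → ℝ) (k : Fin (2*M+1))
    (ρ : Perm (Fin (2*M))) :
    pterm B (mkP (N := 2*M+1) 0 (mkP k ρ)) = (-1)^(k:ℕ) * B (0 : Fin (2*M+2)) k.succ *
      pterm (fun p q => B (k.succAbove p).succ (k.succAbove q).succ) ρ := by
  unfold pterm
  rw [Fin.prod_univ_succ]
  have e0 : mkP (N := 2*M+1) 0 (mkP k ρ) (i0 (0 : Fin (M+1))) = (0 : Fin (2*M+2)) :=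
    mkP_zero _ _
  have e1 : mkP (N := 2*M+1) 0 (mkP k ρ) (i1 (0 : Fin (M+1))) = k.succ := by
    have : i1 (0 : Fin (M+1)) = (0 : Fin (2*M+1)).succ := rfl
    rw [this, mkP_succ, mkP_zero]; rfl
  have e2 : ∀ i : Fin M, mkP (N := 2*M+1) 0 (mkP k ρ) (i0 i.succ) =
      (k.succAbove (ρ (i0 i))).succ := by
    intro i
    have : i0 i.succ = (i0 i).succ.succ := by ext; simp [i0]; ring
    rw [this, mkP_succ, mkP_succ]; rfl
  have e3 : ∀ i : Fin M, mkP (N := 2*M+1) 0 (mkP k ρ) (i1 i.succ) =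
      (k.succAbove (ρ (i1 i))).succ := by
    intro i
    have : i1 i.succ = (i1 i).succ.succ := by ext; simp [i1]; ring
    rw [this, mkP_succ, mkP_succ]; rfl
  rw [e0, e1]
  simp only [e2, e3]
  have hs : ((Perm.sign (mkP (N := 2*M+1) 0 (mkP k ρ)) : ℤ) : ℝ) =
      (-1)^(k:ℕ) * ((Perm.sign ρ : ℤ) : ℝ) := by
    rw [sign_mkP, sign_mkP]; simp
  erw [hs]
  ring

lemma sum_pterm_succ {M : ℕ} (B : Fin (2*(M+1)) → Fin (2*(M+1)) → ℝ)
    (hB : ∀ p q, B p q = - B q p) :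
    ∑ σ, pterm B σ = (2*(M+1) : ℝ) * ∑ k : Fin (2*M+1), (-1)^(k:ℕ) * B (0 : Fin (2*M+2)) k.succ *
      ∑ ρ, pterm (fun p q => B (k.succAbove p).succ (k.succAbove q).succ) ρ := by
  rw [sum_pterm B hB, Finset.sum_filter]
  congr 1
  have := sum_perm_mkP (N := 2*M+1) (fun σ => if σ 0 = 0 then pterm B σ else 0)
  refine this.trans ?_
  simp only [mkP_zero]
  rw [Finset.sum_eq_single 0 (by intro b _ hb; simp [hb]) (by simp)]
  simp only [if_true]
  rw [sum_perm_mkP]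
  refine Finset.sum_congr rfl (fun k _ => ?_)
  rw [Finset.mul_sum]
  exact Finset.sum_congr rfl (fun ρ _ => pterm_mk B k ρ)

lemma Pfaff_eq {M : ℕ} (B : Matrix (Fin (2*M)) (Fin (2*M)) ℝ) :
    Pfaff B = (1 / (2^M * (Nat.factorial M : ℝ))) * ∑ σ, pterm B σ := by
  have h : 2*M/2 = M := by omega
  unfold Pfaff pterm
  congr 1
  · rw [h]
  · refine Finset.sum_congr rfl (fun σ _ => ?_)
    congr 1
    exact Fintype.prod_equiv (finCongr h) _ _ (fun i => rfl)

lemma Pfaff_succ {M : ℕ} (B : Matrix (Fin (2*(M+1))) (Fin (2*(M+1))) ℝ)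
    (hB : ∀ p q, B p q = - B q p) :
    Pfaff B = ∑ k : Fin (2*M+1), (-1)^(k:ℕ) * B (0 : Fin (2*M+2)) k.succ *
      Pfaff (Matrix.of fun p q : Fin (2*M) => B (k.succAbove p).succ (k.succAbove q).succ) := by
  simp only [Pfaff_eq]
  rw [sum_pterm_succ B hB, ← mul_assoc, Finset.mul_sum]
  refine Finset.sum_congr rfl (fun k _ => ?_)
  have : (1 / (2^(M+1) * (Nat.factorial (M+1) : ℝ))) * (2*(M+1)) =
      1 / (2^M * (Nat.factorial M : ℝ)) := by
    rw [Nat.factorial_succ]; push_cast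
    have : (Nat.factorial M : ℝ) ≠ 0 := by positivity
    have : (M : ℝ) + 1 ≠ 0 := by positivity
    field_simp
    ring
  rw [this]
  rw [mul_left_comm]
  rfl

lemma PfI_of_mono {n m : ℕ} (A : Matrix (Fin n) (Fin n) ℝ) (I : Finset (Fin n))
    (v : Fin m → Fin n) (hv : StrictMono v) (hI : I.card = m) (hm : ∀ x, v x ∈ I) :
    PfI A I = Pfaff (Matrix.of fun p q => A (v p) (v q)) := by
  subst hI
  have := Finset.orderEmbOfFin_unique rfl hm hv
  subst this
  rfl

lemma PfI_insert {n M : ℕ} (A : Matrix (Fin n) (Fin n) ℝ) (hA : ∀ p q, A p q = - A q p)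
    (i : Fin n) (J : Finset (Fin n)) (hi : ∀ j ∈ J, i < j) (hJ : J.card = 2*M+1) :
    PfI A (insert i J) = ∑ j ∈ J, (-1)^((J.filter (· < j)).card) * A i j * PfI A (J.erase j) := by
  have hiJ : i ∉ J := fun h => lt_irrefl _ (hi i h)
  set u := J.orderEmbOfFin hJ with hu
  have hum : ∀ x, u x ∈ J := fun x => Finset.orderEmbOfFin_mem J hJ x
  have hmap : J = Finset.univ.map u.toEmbedding := by
    ext x
    have := Finset.range_orderEmbOfFin J hJ
    simp only [Finset.mem_map, Finset.mem_univ, true_and]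
    rw [← Finset.mem_coe, ← this]; rfl
  have hv : StrictMono (Fin.cons i u : Fin (2*M+2) → Fin n) := by
    intro a b hab
    induction b using Fin.cases with
    | zero => simp at hab
    | succ b =>
      induction a using Fin.cases with
      | zero => simpa using hi _ (hum b)
      | succ a => simpa using hab
  obtain ⟨v, v0, vs, hvm, hvI⟩ : ∃ v : Fin (2*(M+1)) → Fin n, v (0 : Fin (2*M+2)) = i ∧
      (∀ k : Fin (2*M+1), v k.succ = u k) ∧ StrictMono v ∧ ∀ x, v x ∈ insert i J := by
    refine ⟨(Fin.cons i u : Fin (2*M+2) → Fin n), rfl, fun k => rfl, hv, ?_⟩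
    intro x
    induction x using Fin.cases (n := 2*M+1) with
    | zero => simp
    | succ x => exact Finset.mem_insert_of_mem (hum x)
  rw [PfI_of_mono (m := 2*(M+1)) A (insert i J) v hvm
    (by rw [Finset.card_insert_of_notMem hiJ, hJ]; ring) hvI]
  rw [Pfaff_succ (Matrix.of fun p q => A (v p) (v q)) (fun p q => hA _ _)]
  conv_rhs => rw [hmap, Finset.sum_map]
  refine Finset.sum_congr rfl (fun k _ => ?_)
  rw [← hmap]
  have hc : (J.filter (· < u k)).card = k := by
    have : J.filter (· < u k) = (Finset.Iio k).map u.toEmbedding := by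
      ext x
      rw [Finset.mem_filter, hmap]
      simp only [Finset.mem_map, Finset.mem_univ, true_and, Finset.mem_Iio]
      constructor
      · rintro ⟨⟨a, rfl⟩, h⟩; exact ⟨a, by simpa using h, rfl⟩
      · rintro ⟨a, h, rfl⟩; exact ⟨⟨a, rfl⟩, by simpa using h⟩
    rw [this]; simp
  have hP := PfI_of_mono A (J.erase (u k)) (fun p => u (k.succAbove p))
    (fun a b hab => by simpa using hab)
    (by rw [Finset.card_erase_of_mem (hum k), hJ]; simp)
    (by intro x; simp [hum, Fin.succAbove_ne])
  have e : u.toEmbedding k = u k := rfl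
  rw [e, hc, hP]
  simp only [Matrix.of_apply, v0, vs]

lemma card_sum_le {n : ℕ} (I : Finset (Fin n)) :
    I.card * (I.card + 1) / 2 ≤ ∑ i ∈ I, ((i:ℕ)+1) := by
  suffices h : I.card * (I.card + 1) ≤ 2 * ∑ i ∈ I, ((i:ℕ)+1) by omega
  induction I using Finset.induction_on_max with
  | empty => simp
  | insert a s h ih =>
    have ha : a ∉ s := fun h' => lt_irrefl _ (h a h')
    have : s.card ≤ a := by
      have : s ⊆ Finset.Iio a := fun x hx => by simpa using h x hx
      simpa using Finset.card_le_card this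
    rw [Finset.sum_insert ha, Finset.card_insert_of_notMem ha]
    nlinarith

lemma sgnSet_eq {n : ℕ} (I : Finset (Fin n)) :
    sgnSet I = (-1)^((∑ i ∈ I, ((i:ℕ)+1)) + I.card * (I.card + 1) / 2) := by
  unfold sgnSet
  have h := card_sum_le I
  have : (∑ i ∈ I, ((i:ℕ)+1)) + I.card * (I.card + 1) / 2 =
    ((∑ i ∈ I, ((i:ℕ)+1)) - I.card * (I.card + 1) / 2) + 2 * (I.card * (I.card + 1) / 2) := by
    omega
  rw [this, pow_add, pow_mul]; simp

lemma sgnSet_insert2 {n : ℕ} (I : Finset (Fin n)) (i j : Fin n) (hi : i ∉ I) (hj : j ∉ I)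
    (hij : i ≠ j) : sgnSet (insert i (insert j I)) = (-1)^((i:ℕ)+j+1) * sgnSet I := by
  rw [sgnSet_eq, sgnSet_eq]
  have h1 : i ∉ insert j I := by simp [hij, hi]
  rw [Finset.sum_insert h1, Finset.sum_insert hj, Finset.card_insert_of_notMem h1,
    Finset.card_insert_of_notMem hj, ← pow_add]
  have : (I.card + 1 + 1) * (I.card + 1 + 1 + 1) / 2 = I.card * (I.card + 1) / 2 + 2 * I.card + 3 := by
    have : (I.card + 1 + 1) * (I.card + 1 + 1 + 1) = I.card * (I.card + 1) + 2 * (2 * I.card + 3) := by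
      ring
    rw [this]; omega
  rw [this]
  apply neg_one_pow_congr
  grind

/-- coefficient -/
def gco {n : ℕ} (A : Matrix (Fin n) (Fin n) ℝ) (I : Finset (Fin n)) : ℝ :=
  if Even I.card then sgnSet I * (2 : ℝ) ^ (I.card / 2) * PfI A I else 0

lemma gco_insert {n : ℕ} (A : Matrix (Fin n) (Fin n) ℝ) (hA : ∀ p q, A p q = - A q p)
    (i : Fin n) (J : Finset (Fin n)) (hi : ∀ j ∈ J, i < j) :
    gco A (insert i J) = ∑ j ∈ J,
      ((-1)^(((Finset.Ioi i \ (J.erase j)).filter (· < j)).card) * (2 * A i j)) *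
        gco A (J.erase j) := by
  have hiJ : i ∉ J := fun h => lt_irrefl _ (hi i h)
  rcases Nat.even_or_odd' J.card with ⟨M, hM | hM⟩
  · have h1 : ¬ Even (insert i J).card := by
      rw [Finset.card_insert_of_notMem hiJ, hM]; simp
    rw [gco, if_neg h1]
    symm
    apply Finset.sum_eq_zero
    intro j hj
    have : ¬ Even (J.erase j).card := by
      have := Finset.card_erase_add_one hj
      grind
    rw [gco, if_neg this, mul_zero]
  · have hc : (insert i J).card = 2*(M+1) := by
      rw [Finset.card_insert_of_notMem hiJ, hM]; ring
    rw [gco, if_pos (by rw [hc]; simp), PfI_insert A hA i J hi hM, Finset.mul_sum]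
    refine Finset.sum_congr rfl (fun j hj => ?_)
    have hce : (J.erase j).card = 2 * M := by rw [Finset.card_erase_of_mem hj, hM]; simp
    rw [gco, if_pos (by rw [hce]; simp), hc, hce]
    have hij := hi j hj
    have hs : sgnSet (insert i J) = (-1)^((i:ℕ)+j+1) * sgnSet (J.erase j) := by
      conv_lhs => rw [← Finset.insert_erase hj]
      apply sgnSet_insert2
      · simp [hiJ]
      · simp
      · exact hij.ne
    have hcount : ((Finset.Ioi i \ (J.erase j)).filter (· < j)).card
        + (J.filter (· < j)).card + (i:ℕ) + 1 = j := by
      have hd : (Finset.Ioo i j) = ((Finset.Ioi i \ (J.erase j)).filter (· < j)) ∪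
          (J.filter (· < j)) := by
        ext x
        simp only [Finset.mem_Ioo, Finset.mem_union, Finset.mem_filter, Finset.mem_sdiff,
          Finset.mem_Ioi, Finset.mem_erase]
        constructor
        · rintro ⟨h1, h2⟩
          by_cases hx : x ∈ J
          · exact Or.inr ⟨hx, h2⟩
          · exact Or.inl ⟨⟨h1, fun h => hx h.2⟩, h2⟩
        · rintro (⟨⟨h1, _⟩, h2⟩ | ⟨h1, h2⟩)
          · exact ⟨h1, h2⟩
          · exact ⟨hi x h1, h2⟩
      have hdis : Disjoint ((Finset.Ioi i \ (J.erase j)).filter (· < j)) (J.filter (· < j)) := by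
        rw [Finset.disjoint_left]
        intro x hx hx'
        simp only [Finset.mem_filter, Finset.mem_sdiff, Finset.mem_erase] at hx hx'
        exact hx.1.2 ⟨hx.2.ne, hx'.1⟩
      have := congrArg Finset.card hd
      rw [Finset.card_union_of_disjoint hdis, Fin.card_Ioo] at this
      have : (i:ℕ) < j := hij
      omega
    rw [hs]
    have hsg : (-1:ℝ)^((i:ℕ)+j+1) * (-1)^((J.filter (· < j)).card) =
        (-1)^(((Finset.Ioi i \ (J.erase j)).filter (· < j)).card) := by
      rw [← pow_add]
      apply neg_one_pow_congr
      grind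
    rw [← hsg]
    have h2 : 2*(M+1)/2 = M+1 := by omega
    have h3 : 2*M/2 = M := by omega
    rw [h2, h3]
    ring

lemma list_kill {R : Type*} [Ring R] (x : R) (l : List R) (hx : x ∈ l)
    (h0 : x * x = 0) (h : ∀ y ∈ l, x * y = -(y * x)) : x * l.prod = 0 := by
  induction l with
  | nil => simp at hx
  | cons a l ih =>
    rw [List.prod_cons]
    by_cases hax : x = a
    · rw [← hax, ← mul_assoc, h0, zero_mul]
    · have hx' : x ∈ l := by simpa [hax] using hx
      rw [← mul_assoc, h a (by simp), neg_mul, mul_assoc,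
        ih hx' (fun y hy => h y (by simp [hy])), mul_zero, neg_zero]

/-- ordered product over a finset -/
def oProd {R : Type*} [Ring R] {n : ℕ} (a : Fin n → R) (S : Finset (Fin n)) : R :=
  ((S.sort (· ≤ ·)).map a).prod

lemma oProd_insert {R : Type*} [Ring R] {n : ℕ} (a : Fin n → R) (S : Finset (Fin n)) (i : Fin n)
    (hi : ∀ j ∈ S, i < j) : oProd a (insert i S) = a i * oProd a S := by
  unfold oProd
  rw [Finset.sort_insert _ (fun b hb => (hi b hb).le) (fun h => lt_irrefl _ (hi i h))]
  simp

lemma contract {R : Type*} [Ring R] [Algebra ℝ R] {n : ℕ} (a : Fin n → R) (c f : R)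
    (t : Fin n → ℝ) (hc : ∀ j, c * a j = algebraMap ℝ R (t j) - a j * c) (hf : c * f = 0)
    (J : Finset (Fin n)) :
    c * (oProd a J * f) = ∑ j ∈ J, ((-1)^((J.filter (· < j)).card) * t j) •
      (oProd a (J.erase j) * f) := by
  induction J using Finset.induction_on_min with
  | empty => simp [oProd, hf]
  | insert i S hi ih =>
    have hiS : i ∉ S := fun h => lt_irrefl _ (hi i h)
    rw [oProd_insert a S i hi, Finset.sum_insert hiS, mul_assoc, ← mul_assoc, hc, sub_mul,
      mul_assoc, ih, Finset.mul_sum, Finset.erase_insert hiS]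
    have h0 : ((insert i S).filter (· < i)).card = 0 := by
      rw [Finset.card_eq_zero, Finset.filter_eq_empty_iff]
      intro x hx
      rcases Finset.mem_insert.1 hx with rfl | hx
      · simp
      · exact (hi x hx).le.not_gt
    rw [h0, sub_eq_add_neg, ← Finset.sum_neg_distrib, ← Algebra.smul_def]
    congr 1
    · simp
    · refine Finset.sum_congr rfl (fun j hj => ?_)
      have hj' := hi j hj
      rw [Finset.erase_insert_of_ne hj'.ne, oProd_insert a (S.erase j) i
        (fun x hx => hi x (Finset.mem_of_mem_erase hx)), Finset.filter_insert, if_pos hj',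
        Finset.card_insert_of_notMem (by simp [hiS]), pow_succ, mul_smul_comm, mul_assoc,
        ← neg_smul]
      congr 1
      · ring
      · rw [mul_assoc]

lemma main_step {R : Type*} [Ring R] [Algebra ℝ R] {n : ℕ} (a c : Fin n → R) (f : R)
    (A : Matrix (Fin n) (Fin n) ℝ) (hA : ∀ p q, A p q = - A q p)
    (hc : ∀ i j, c i * a j = algebraMap ℝ R (2 * A i j) - a j * c i) (hf : ∀ i, c i * f = 0)
    (i : Fin n)
    (ih : oProd (fun i => a i + c i) (Finset.Ioi i) * f =
      ∑ I ∈ (Finset.Ioi i).powerset, gco A I • (oProd a (Finset.Ioi i \ I) * f)) :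
    oProd (fun i => a i + c i) (Finset.Ici i) * f =
      ∑ I ∈ (Finset.Ici i).powerset, gco A I • (oProd a (Finset.Ici i \ I) * f) := by
  have hI : Finset.Ici i = insert i (Finset.Ioi i) := by
    ext x; simp [le_iff_eq_or_lt]
  have hiT : i ∉ Finset.Ioi i := by simp
  rw [hI, Finset.sum_powerset_insert hiT, oProd_insert _ _ i (by simp), mul_assoc, ih, add_mul]
  congr 1
  · rw [Finset.mul_sum]
    refine Finset.sum_congr rfl (fun I hI => ?_)
    have hiI : i ∉ I := fun h => hiT (Finset.mem_powerset.1 hI h)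
    rw [Finset.insert_sdiff_of_notMem _ hiI, oProd_insert _ _ i (by simp +contextual), mul_smul_comm,
      mul_assoc]
  · rw [Finset.mul_sum]
    have h1 : ∀ I ∈ (Finset.Ioi i).powerset, c i * gco A I • (oProd a (Finset.Ioi i \ I) * f) =
        ∑ j ∈ Finset.Ioi i \ I, (((-1)^(((Finset.Ioi i \ I).filter (· < j)).card) * (2 * A i j)) *
          gco A I) • (oProd a ((Finset.Ioi i \ I).erase j) * f) := by
      intro I _
      rw [mul_smul_comm, contract a (c i) f (fun j => 2 * A i j) (hc i) (hf i), Finset.smul_sum]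
      refine Finset.sum_congr rfl (fun j _ => ?_)
      rw [smul_smul, mul_comm]
    have h2 : ∀ J ∈ (Finset.Ioi i).powerset,
        gco A (insert i J) • (oProd a (insert i (Finset.Ioi i) \ insert i J) * f) =
        ∑ j ∈ J, (((-1)^(((Finset.Ioi i \ (J.erase j)).filter (· < j)).card) * (2 * A i j)) *
          gco A (J.erase j)) • (oProd a ((Finset.Ioi i \ (J.erase j)).erase j) * f) := by
      intro J hJ
      have hJ' := Finset.mem_powerset.1 hJ
      rw [gco_insert A hA i J (fun j hj => by simpa using hJ' hj), Finset.sum_smul]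
      refine Finset.sum_congr rfl (fun j hj => ?_)
      congr 3
      ext x
      simp only [Finset.mem_sdiff, Finset.mem_insert, Finset.mem_erase, Finset.mem_Ioi]
      constructor
      · rintro ⟨h | h, h'⟩
        · exact absurd (Or.inl h) h'
        · push Not at h'
          exact ⟨fun e => h'.2 (e ▸ hj), h, fun e => h'.2 e.2⟩
      · rintro ⟨h1, h2, h3⟩
        refine ⟨Or.inr h2, ?_⟩
        rintro (h | h)
        · exact h2.ne' h
        · exact h3 ⟨h1, h⟩
    rw [Finset.sum_congr rfl h1, Finset.sum_congr rfl h2, Finset.sum_sigma', Finset.sum_sigma']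
    refine Finset.sum_bij' (fun x _ => ⟨insert x.2 x.1, x.2⟩) (fun x _ => ⟨x.1.erase x.2, x.2⟩)
      ?_ ?_ ?_ ?_ ?_
    · rintro ⟨I, j⟩ h
      simp only [Finset.mem_sigma, Finset.mem_powerset, Finset.mem_sdiff] at h ⊢
      exact ⟨Finset.insert_subset h.2.1 h.1, Finset.mem_insert_self _ _⟩
    · rintro ⟨J, j⟩ h
      simp only [Finset.mem_sigma, Finset.mem_powerset, Finset.mem_sdiff] at h ⊢
      exact ⟨(Finset.erase_subset _ _).trans h.1, h.1 h.2, by simp⟩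
    · rintro ⟨I, j⟩ h
      simp only [Finset.mem_sigma, Finset.mem_powerset, Finset.mem_sdiff] at h
      simp [Finset.erase_insert h.2.2]
    · rintro ⟨J, j⟩ h
      simp only [Finset.mem_sigma] at h
      simp [Finset.insert_erase h.2]
    · rintro ⟨I, j⟩ h
      simp only [Finset.mem_sigma, Finset.mem_powerset, Finset.mem_sdiff] at h
      simp only [Finset.erase_insert h.2.2]

lemma main_abs {R : Type*} [Ring R] [Algebra ℝ R] {n : ℕ} (a c : Fin n → R) (f : R)
    (A : Matrix (Fin n) (Fin n) ℝ) (hA : ∀ p q, A p q = - A q p)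
    (hc : ∀ i j, c i * a j = algebraMap ℝ R (2 * A i j) - a j * c i) (hf : ∀ i, c i * f = 0) :
    oProd (fun i => a i + c i) Finset.univ * f =
      ∑ I : Finset (Fin n), gco A I • (oProd a (Iᶜ) * f) := by
  have key : ∀ d : ℕ, ∀ S : Finset (Fin n), (∀ x : Fin n, x ∈ S ↔ n ≤ (x:ℕ) + d) →
      oProd (fun i => a i + c i) S * f = ∑ I ∈ S.powerset, gco A I • (oProd a (S \ I) * f) := by
    intro d
    induction d with
    | zero =>
      intro S hS
      have : S = ∅ := by
        ext x; have := x.isLt; rw [hS]; simp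
      subst this
      have : PfI A ∅ = 1 := by
        rw [PfI_of_mono (m := 0) A ∅ Fin.elim0 (fun a => a.elim0) rfl (fun a => a.elim0)]
        simp [Pfaff]
      simp [oProd, gco, sgnSet, this]
    | succ d ih =>
      intro S hS
      by_cases hd : d < n
      · have hS' : S = Finset.Ici (⟨n - (d+1), by omega⟩ : Fin n) := by
          ext x; rw [hS, Finset.mem_Ici, Fin.le_def]; simp only; omega
        rw [hS']
        apply main_step a c f A hA hc hf
        apply ih
        intro x
        rw [Finset.mem_Ioi, Fin.lt_def]; simp only; omega
      · apply ih
        intro x; rw [hS]; omega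
  have := key n Finset.univ (by intro x; simp)
  rw [this, Finset.powerset_univ]
  rfl

end PureSpinorAux

/-- In the Clifford algebra of the quadratic form
`Q(x) = 2 Σ_{i=1}^n x_i x_{n+i}` on `ℝ^{2n}`, with `f = ι(f_1)⋯ι(f_n)` and
`h = Π_i ι(e_i + Σ_j A_{ij} f_j)`, one has
`h·f = Σ_{|I| even} sgn(I,[n]) 2^{|I|/2} Pf_I(A) e_{[n]∖I}·f`. -/
theorem pure_spinor_expansion (n : ℕ) (hn : 1 ≤ n)
    (Q : QuadraticForm ℝ (Fin (2 * n) → ℝ))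
    (hQ : ∀ x : Fin (2 * n) → ℝ,
      Q x = 2 * ∑ i : Fin n,
        x ⟨(i : ℕ), by have := i.isLt; omega⟩ *
          x ⟨n + (i : ℕ), by have := i.isLt; omega⟩)
    (A : Matrix (Fin n) (Fin n) ℝ) (hA : Aᵀ = -A) :
    hElt Q A * fElt Q =
      ∑ I ∈ Finset.univ.filter (fun I : Finset (Fin n) => Even I.card),
        (sgnSet I * (2 : ℝ) ^ (I.card / 2) * PfI A I) • (eProd Q Iᶜ * fElt Q) := by
  have hA' : ∀ p q, A p q = - A q p := by
    intro p q
    have := congrFun (congrFun hA q) p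
    simpa using this
  have hpol : ∀ x y : Fin (2 * n) → ℝ, QuadraticMap.polar Q x y = 2 * ∑ i : Fin n,
      (x ⟨(i : ℕ), by have := i.isLt; omega⟩ * y ⟨n + (i : ℕ), by have := i.isLt; omega⟩ +
       y ⟨(i : ℕ), by have := i.isLt; omega⟩ * x ⟨n + (i : ℕ), by have := i.isLt; omega⟩) := by
    intro x y
    rw [QuadraticMap.polar, hQ, hQ, hQ, ← mul_sub, ← mul_sub, ← Finset.sum_sub_distrib,
      ← Finset.sum_sub_distrib]
    congr 1
    refine Finset.sum_congr rfl (fun i _ => ?_)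
    simp only [Pi.add_apply]
    ring
  have he0 : ∀ i j : Fin n, evec n j ⟨(i : ℕ), by have := i.isLt; omega⟩ = if i = j then 1 else 0 := by
    intro i j; simp [evec, Pi.single_apply, Fin.ext_iff]
  have he1 : ∀ i j : Fin n, evec n j ⟨n + (i : ℕ), by have := i.isLt; omega⟩ = 0 := by
    intro i j; have := j.isLt; simp [evec, Pi.single_apply]; omega
  have hf0 : ∀ i j : Fin n, fvec n j ⟨(i : ℕ), by have := i.isLt; omega⟩ = 0 := by
    intro i j; have := i.isLt; simp [fvec, Pi.single_apply]; omega
  have hf1 : ∀ i j : Fin n, fvec n j ⟨n + (i : ℕ), by have := i.isLt; omega⟩ =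
      if i = j then 1 else 0 := by
    intro i j; simp [fvec, Pi.single_apply, Fin.ext_iff]
  have hff : ∀ i j, CliffordAlgebra.ι Q (fvec n i) * CliffordAlgebra.ι Q (fvec n j) =
      -(CliffordAlgebra.ι Q (fvec n j) * CliffordAlgebra.ι Q (fvec n i)) := by
    intro i j
    rw [eq_neg_iff_add_eq_zero, CliffordAlgebra.ι_mul_ι_add_swap, hpol]
    simp [hf0]
  have hfs : ∀ i, CliffordAlgebra.ι Q (fvec n i) * CliffordAlgebra.ι Q (fvec n i) = 0 := by
    intro i
    rw [CliffordAlgebra.ι_sq_scalar, hQ]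
    simp [hf0]
  have hfk : ∀ i, CliffordAlgebra.ι Q (fvec n i) * fElt Q = 0 := by
    intro i
    refine list_kill _ _ (by simp [List.mem_ofFn]) (hfs i) ?_
    intro y hy
    rw [List.mem_ofFn] at hy
    obtain ⟨j, rfl⟩ := hy
    exact hff i j
  have key := main_abs (fun i => CliffordAlgebra.ι Q (evec n i))
    (fun i => CliffordAlgebra.ι Q (∑ j : Fin n, A i j • fvec n j)) (fElt Q) A hA' ?_ ?_
  · have h1 : hElt Q A = oProd (fun i => CliffordAlgebra.ι Q (evec n i) +
        CliffordAlgebra.ι Q (∑ j : Fin n, A i j • fvec n j)) Finset.univ := by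
      unfold hElt oProd
      rw [Fin.sort_univ, List.ofFn_eq_map]
      simp only [map_add]
    rw [h1, key, Finset.sum_filter]
    refine Finset.sum_congr rfl (fun I _ => ?_)
    unfold gco
    split_ifs
    · rfl
    · simp
  · intro i j
    rw [eq_sub_iff_add_eq, CliffordAlgebra.ι_mul_ι_add_swap, hpol]
    congr 2
    simp [Finset.sum_apply, he0, he1, hf0, hf1]
  · intro i
    simp only [map_sum, map_smul, Finset.sum_mul, smul_mul_assoc, hfk, smul_zero,
      Finset.sum_const_zero]
end
end

section
/- Let A be the 4×4 real skew-symmetric matrix with above-diagonal entries a_{12} = 0, a_{13} = 0, a_{14} = 2, a_{23} = 0, a_{24} = 0, a_{34} = −2 (and a_{ji} = −a_{ij}). Then M_{j,k}(A) ≥ 0 for all 1 ≤ j ≤ k ≤ 3, yet A does not lie in the Euclidean closure of S_4^{>0} in the space of 4×4 real matrices. In particular, nonnegativity of all the minors M_{j,k} does not suffice for total nonnegativity. -/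
noncomputable section

open Matrix

theorem word4 : wordD 4 = [4, 2, 1, 3, 2, 4] := by decide

/-- `xMat 4 i s` with the index type literally `Fin 8`. -/
def y8 (i : ℕ) (s : ℝ) : Matrix (Fin 8) (Fin 8) ℝ := xMat 4 i s

theorem y8_apply (i : ℕ) (s : ℝ) (p q : Fin 8) : y8 i s p q =
    (if (p : ℕ) = (q : ℕ) then 1 else 0) +
    (if i < 4 then
        (if (p : ℕ) + 1 = i ∧ (q : ℕ) + 1 = i + 1 then s else 0)
      + (if (p : ℕ) + 1 = 4 + i + 1 ∧ (q : ℕ) + 1 = 4 + i then -s else 0)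
     else
        (if (p : ℕ) + 1 = 3 ∧ (q : ℕ) + 1 = 8 then s else 0)
      + (if (p : ℕ) + 1 = 4 ∧ (q : ℕ) + 1 = 7 then -s else 0)) := rfl

theorem prod4 (t : ℕ → ℝ) : prodX 4 t =
    y8 4 (t 0) * (y8 2 (t 1) * (y8 1 (t 2) * (y8 3 (t 3) *
      (y8 2 (t 4) * y8 4 (t 5))))) := by
  have h : List.range (Npar 4) = [0, 1, 2, 3, 4, 5] := by decide
  simp only [prodX, h, word4, List.map_cons, List.map_nil, List.prod_cons, List.prod_nil, mul_one]
  rfl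

theorem row_1 (t : ℕ → ℝ) (q : Fin 8) (hq : q = 0 ∨ q = 1 ∨ q = 2 ∨ q = 3 ∨ q = 6) :
    prodX 4 t (3 : Fin 8) q = if q = 3 then 1 else if q = 6 then - t 0 - t 5 else 0 := by
  rw [prod4]
  rcases hq with rfl | rfl | rfl | rfl | rfl
  all_goals simp [Matrix.mul_apply, Fin.sum_univ_eight, y8_apply]
  all_goals ring

theorem neg_entry (t : ℕ → ℝ) (ht : ∀ i < Npar 4, 0 < t i) : Amat 4 t 3 2 ≤ 0 := by
  by_cases hu : IsUnit (X1 4 t).det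
  · have h : X1 4 t * Amat 4 t = X2 4 t := by
      rw [Amat, Matrix.mul_nonsing_inv_cancel_left _ _ hu]
    have h2 := congrFun (congrFun h 3) 2
    have e0 : X1 4 t 3 0 = 0 := by
      have := row_1 t 0 (by simp)
      simp at this
      exact this
    have e1 : X1 4 t 3 1 = 0 := by
      have := row_1 t 1 (by simp)
      simp at this
      exact this
    have e2 : X1 4 t 3 2 = 0 := by
      have := row_1 t 2 (by simp)
      simp at this
      exact this
    have e3 : X1 4 t 3 3 = 1 := by
      have := row_1 t 3 (by simp)
      simp at this
      exact this
    have e6 : X2 4 t 3 2 = - t 0 - t 5 := by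
      have := row_1 t 6 (by simp)
      simp at this
      exact this
    rw [Matrix.mul_apply, Fin.sum_univ_four, e0, e1, e2, e3, e6] at h2
    have a := ht 0 (by decide)
    have b := ht 5 (by decide)
    linarith
  · rw [Amat, Matrix.nonsing_inv_apply_not_isUnit _ hu]
    simp

/-- The given `4 × 4` skew-symmetric matrix has all minors `M_{j,k}`
nonnegative but is not totally nonnegative. -/
theorem minors_nonneg_not_sufficient (A : Matrix (Fin 4) (Fin 4) ℝ)
    (hA : A = !![0, 0, 0, 2; 0, 0, 0, 0; 0, 0, 0, -2; -2, 0, 2, 0]) :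
    (∀ j k : ℕ, 1 ≤ j → j ≤ k → k ≤ 3 → 0 ≤ Mminor 4 j k A) ∧
      A ∉ closure (Spos 4) := by
  subst hA
  constructor
  · intro j k h1 h2 h3
    have h4 : j ≤ 3 := h2.trans h3
    interval_cases j <;> interval_cases k <;>
      simp [Mminor, Matrix.det_succ_row_zero, Fin.sum_univ_succ, Fin.succAbove]
    norm_num
  · intro hmem
    have hc : IsClosed {B : Matrix (Fin 4) (Fin 4) ℝ | B 3 2 ≤ 0} :=
      isClosed_le (by fun_prop) continuous_const
    have hs : Spos 4 ⊆ {B : Matrix (Fin 4) (Fin 4) ℝ | B 3 2 ≤ 0} := by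
      rintro B ⟨t, ht, rfl⟩
      exact neg_entry t ht
    have := closure_minimal hs hc hmem
    simp at this
    linarith
end
end
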